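/- (i) If θ ∈ Ξ is a dyadic rational with θ < 1/2, then there exist integers p, m ≥ 1 with θ = p/2^m such that p/(2^m − 1) ∈ Ξ and the open interval (p/2^m, p/(2^m − 1)) is disjoint from Ξ; that is, θ is the infimum of a connected component of (0, 1/2) ∖ Ξ whose supremum is p/(2^m − 1). (ii) If θ ∈ Ξ and θ = q/(2^r − 1) for some integers q, r ≥ 1, then there exist integers p, n ≥ 1 with θ = p/(2ⁿ − 1) such that p/2ⁿ ∈ Ξ and the open interval (p/2ⁿ, p/(2ⁿ − 1)) is disjoint from Ξ; that is, θ is the supremum of a connected component of (0, 1/2) ∖ Ξ whose infimum is p/2ⁿ. -/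

import Mathlib

/-- The set `Ξ` of Head's angles: angles `θ ∈ (0, 1/2]` with `2^k θ ∈ [θ, 1] (mod ℤ)`
for all `k ≥ 0`. -/
def HeadXi : Set ℝ :=
  {θ : ℝ | 0 < θ ∧ θ ≤ 1/2 ∧ ∀ k : ℕ, ∃ n : ℤ, θ ≤ 2 ^ k * θ - n ∧ 2 ^ k * θ - n ≤ 1}

/-!
Suppose `2 ^ m * θ = p` with `m` minimal, let `φ = p / (2 ^ m - 1)` and `m = k + d` with `0 < d`.
By minimality `2 ^ k * θ ∈ [θ, 1) (mod ℤ)`; multiplying by `2 ^ d` gives an integer `j` with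
`2 ^ d * θ ≤ j ≤ 2 ^ d - 1`. Since `2 ^ k * φ ≡ (j + φ) / 2 ^ d` and
`2 ^ d * φ = 2 ^ d * θ + φ / 2 ^ k ≤ j + φ`, also `2 ^ k * φ ∈ [φ, 1] (mod ℤ)`.

Suppose `2 ^ n * θ = θ + p` with `n` minimal, let `ψ = p / 2 ^ n` and `n = k + d` with `0 < k, d`.
By minimality `2 ^ k * θ ∈ (θ, 1] (mod ℤ)`; multiplying by `2 ^ d` gives `j + θ` with `j` an
integer and `2 ^ d * θ < j + θ`. The orbit condition `2 ^ d * θ - b ∈ [θ, 1]` now forces `b < j`,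
hence `2 ^ d * ψ ≤ 2 ^ d * θ ≤ b + 1 ≤ j`, while `2 ^ k * ψ ≡ j / 2 ^ d`.

A point `t` of the gap satisfies `p < 2 ^ m * t < p + t`, so `2 ^ m * t ∉ [t, 1] (mod ℤ)`.
-/

namespace HeadXi

variable {θ φ ψ : ℝ} {p : ℤ} {k m n : ℕ}

/-- The `k`-th iterate of `θ` under doubling lies in the arc `[θ, 1]` modulo `ℤ`. The set `HeadXi`
consists of the `θ ∈ (0, 1/2]` satisfying this for all `k`. -/
def StaysAbove (θ : ℝ) (k : ℕ) : Prop :=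
  ∃ a : ℤ, θ ≤ 2 ^ k * θ - a ∧ 2 ^ k * θ - a ≤ 1

theorem eq_div_two_pow_iff {x y : ℝ} : x = y / 2 ^ m ↔ 2 ^ m * x = y := by
  rw [eq_div_iff (by positivity), mul_comm]

theorem eq_div_two_pow_sub_one_iff {x y : ℝ} (hn : n ≠ 0) :
    x = y / (2 ^ n - 1) ↔ 2 ^ n * x = x + y := by
  have hpow : (1 : ℝ) < 2 ^ n := one_lt_pow₀ one_lt_two hn
  rw [eq_div_iff (sub_pos.2 hpow).ne', mul_sub_one, sub_eq_iff_eq_add', mul_comm]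

theorem notMem_of_int_lt_of_lt_int_add (h₁ : p < 2 ^ m * θ) (h₂ : 2 ^ m * θ < p + θ) :
    θ ∉ HeadXi := by
  rintro ⟨-, -, hθ⟩
  obtain ⟨a, ha₁, ha₂⟩ := hθ m
  have hap : a < p := by exact_mod_cast (by linarith : (a : ℝ) < p)
  have hpa : p < a + 1 := by exact_mod_cast (by linarith : (p : ℝ) < a + 1)
  lia

theorem Ioo_inter_eq_empty (p : ℤ) (hm : m ≠ 0) :
    Set.Ioo ((p : ℝ) / 2 ^ m) (p / (2 ^ m - 1)) ∩ HeadXi = ∅ := by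
  have hpow : (1 : ℝ) < 2 ^ m := one_lt_pow₀ one_lt_two hm
  refine Set.disjoint_iff_inter_eq_empty.1 (Set.disjoint_left.2 ?_)
  rintro t ⟨hpt, htp⟩
  rw [div_lt_iff₀' (by positivity)] at hpt
  rw [lt_div_iff₀ (by linarith)] at htp
  exact notMem_of_int_lt_of_lt_int_add hpt (by linarith)

theorem staysAbove_zero (hθ : θ ≤ 1) : StaysAbove θ 0 :=
  ⟨0, by simp, by simpa using hθ⟩

theorem mem_of_two_pow_mul_eq_int (hψ₀ : 0 < ψ) (hψ : ψ ≤ 1 / 2) (hp : 2 ^ n * ψ = p)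
    (hstay : ∀ k < n, StaysAbove ψ k) : ψ ∈ HeadXi := by
  refine ⟨hψ₀, hψ, fun k ↦ ?_⟩
  obtain hk | hk := lt_or_ge k n
  · exact hstay k hk
  obtain ⟨i, rfl⟩ := Nat.exists_eq_add_of_le' hk
  have hshift : (2 : ℝ) ^ (i + n) * ψ - (2 ^ i * p - 1 : ℤ) = 1 := by
    push_cast
    linear_combination 2 ^ i * hp
  exact ⟨2 ^ i * p - 1, by linarith, hshift.le⟩

theorem mem_of_two_pow_mul_eq_add_int (hφ₀ : 0 < φ) (hφ : φ ≤ 1 / 2) (hn : n ≠ 0)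
    (hp : 2 ^ n * φ = φ + p) (hstay : ∀ k < n, StaysAbove φ k) : φ ∈ HeadXi := by
  refine ⟨hφ₀, hφ, fun k ↦ ?_⟩
  induction k using Nat.strong_induction_on with
  | _ k ih =>
    obtain hk | hk := lt_or_ge k n
    · exact hstay k hk
    obtain ⟨i, rfl⟩ := Nat.exists_eq_add_of_le' hk
    obtain ⟨a, ha⟩ := ih i (by lia)
    have hshift : (2 : ℝ) ^ (i + n) * φ - (a + 2 ^ i * p : ℤ) = 2 ^ i * φ - a := by
      push_cast
      linear_combination 2 ^ i * hp
    exact ⟨a + 2 ^ i * p, by rwa [hshift]⟩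

theorem exists_sub_int_lt_one (hθ : θ ∈ HeadXi) (hk : ∀ a : ℤ, 2 ^ k * θ ≠ a) :
    ∃ a : ℤ, θ ≤ 2 ^ k * θ - a ∧ 2 ^ k * θ - a < 1 := by
  obtain ⟨a, hθa, ha⟩ := hθ.2.2 k
  refine ⟨a, hθa, ha.lt_of_ne fun h ↦ hk (a + 1) ?_⟩
  push_cast
  linarith

theorem exists_lt_sub_int (hθ : θ ∈ HeadXi) (hk : ∀ a : ℤ, 2 ^ k * θ ≠ θ + a) :
    ∃ a : ℤ, θ < 2 ^ k * θ - a ∧ 2 ^ k * θ - a ≤ 1 := by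
  obtain ⟨a, hθa, ha⟩ := hθ.2.2 k
  exact ⟨a, hθa.lt_of_ne fun h ↦ hk a (by linarith), ha⟩

theorem right_endpoint_le_half (hθ : θ < 1 / 2) (hm : m ≠ 0) (hp : 2 ^ m * θ = p)
    (hφ : 2 ^ m * φ = φ + p) : φ ≤ 1 / 2 := by
  obtain ⟨d, rfl⟩ := Nat.exists_eq_add_one_of_ne_zero hm
  have hd : (1 : ℝ) ≤ 2 ^ d := one_le_pow₀ one_le_two
  rw [pow_succ] at hp hφ
  have hlt : (p : ℝ) < 2 ^ d := by nlinarith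
  have hle : (p : ℝ) + 1 ≤ 2 ^ d := by exact_mod_cast Int.add_one_le_iff.2 (by exact_mod_cast hlt)
  nlinarith

theorem staysAbove_right_endpoint (hθ : θ ∈ HeadXi) (hp : 2 ^ m * θ = p)
    (hφ : 2 ^ m * φ = φ + p) (hφ₀ : 0 ≤ φ) (hφ₁ : φ ≤ 1) (hkm : k ≤ m)
    (hk : ∀ a : ℤ, 2 ^ k * θ ≠ a) : StaysAbove φ k := by
  obtain ⟨a, hθa, ha⟩ := exists_sub_int_lt_one hθ hk
  obtain ⟨d, rfl⟩ := Nat.exists_eq_add_of_le hkm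
  have hk₁ : (1 : ℝ) ≤ 2 ^ k := one_le_pow₀ one_le_two
  have hd₀ : (0 : ℝ) < 2 ^ d := by positivity
  have hj : (2 : ℝ) ^ d * (2 ^ k * θ - a) = (p - 2 ^ d * a : ℤ) := by
    push_cast
    linear_combination hp
  have hφj : (2 : ℝ) ^ d * (2 ^ k * φ - a) = (p - 2 ^ d * a : ℤ) + φ := by
    push_cast
    linear_combination hφ
  set j : ℤ := p - 2 ^ d * a
  have hθj : 2 ^ d * θ ≤ j := hj ▸ mul_le_mul_of_nonneg_left hθa hd₀.le
  have hj_lt : (j : ℝ) < 2 ^ d := by rw [← hj]; exact mul_lt_of_lt_one_right hd₀ ha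
  have hj_le : (j : ℝ) + 1 ≤ 2 ^ d := by
    exact_mod_cast Int.add_one_le_iff.2 (by exact_mod_cast hj_lt)
  have hφθ : 2 ^ d * (φ - θ) ≤ φ := by
    have : 2 ^ k * (2 ^ d * (φ - θ)) = φ := by linear_combination hφ - hp
    nlinarith
  refine ⟨a, le_of_mul_le_mul_left ?_ hd₀, le_of_mul_le_mul_left ?_ hd₀⟩
  · calc 2 ^ d * φ ≤ 2 ^ d * θ + φ := by linarith
      _ ≤ j + φ := by gcongr
      _ = 2 ^ d * (2 ^ k * φ - a) := hφj.symm
  · calc 2 ^ d * (2 ^ k * φ - a) = j + φ := hφj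
      _ ≤ 2 ^ d * 1 := by linarith

theorem right_endpoint_mem (hθ : θ ∈ HeadXi) (hθ_lt : θ < 1 / 2) (hp : 2 ^ m * θ = p)
    (hmin : ∀ k < m, ∀ a : ℤ, 2 ^ k * θ ≠ a) (hφ : 2 ^ m * φ = φ + p) : φ ∈ HeadXi := by
  have hm : m ≠ 0 := by
    rintro rfl
    linarith [hθ.1]
  have hpow : (1 : ℝ) < 2 ^ m := one_lt_pow₀ one_lt_two hm
  have hφ₀ : 0 < φ := by
    have hp₀ : (0 : ℝ) < p := hp ▸ mul_pos (by positivity) hθ.1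
    nlinarith
  have hφ₂ : φ ≤ 1 / 2 := right_endpoint_le_half hθ_lt hm hp hφ
  exact mem_of_two_pow_mul_eq_add_int hφ₀ hφ₂ hm hφ fun k hk ↦
    staysAbove_right_endpoint hθ hp hφ hφ₀.le (by linarith) hk.le (hmin k hk)

theorem left_endpoint_le {x : ℝ} (hθ : 0 ≤ θ) (hx : 2 ^ n * θ = θ + x) (hψ : 2 ^ n * ψ = x) :
    ψ ≤ θ := by
  have hpow : (0 : ℝ) < 2 ^ n := by positivity
  exact le_of_mul_le_mul_left (by linarith) hpow

theorem staysAbove_left_endpoint (hθ : θ ∈ HeadXi) (hp : 2 ^ n * θ = θ + p)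
    (hψ : 2 ^ n * ψ = p) (hkn : k ≤ n) (hk : ∀ a : ℤ, 2 ^ k * θ ≠ θ + a) : StaysAbove ψ k := by
  have hψθ : ψ ≤ θ := left_endpoint_le hθ.1.le hp hψ
  obtain ⟨a, hθa, ha⟩ := exists_lt_sub_int hθ hk
  obtain ⟨d, rfl⟩ := Nat.exists_eq_add_of_le hkn
  obtain ⟨b, hθb, hb⟩ := hθ.2.2 d
  have hd₀ : (0 : ℝ) < 2 ^ d := by positivity
  have hj : (2 : ℝ) ^ d * (2 ^ k * θ - a) = (p - 2 ^ d * a : ℤ) + θ := by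
    push_cast
    linear_combination hp
  have hψj : (2 : ℝ) ^ d * (2 ^ k * ψ - a) = (p - 2 ^ d * a : ℤ) := by
    push_cast
    linear_combination hψ
  set j : ℤ := p - 2 ^ d * a
  have hb_lt : (b : ℝ) < j := by
    have : (2 : ℝ) ^ d * θ < j + θ := hj ▸ mul_lt_mul_of_pos_left hθa hd₀
    linarith
  have hb_le : (b : ℝ) + 1 ≤ j := by exact_mod_cast Int.add_one_le_iff.2 (by exact_mod_cast hb_lt)
  refine ⟨a, le_of_mul_le_mul_left ?_ hd₀, ?_⟩
  · calc 2 ^ d * ψ ≤ 2 ^ d * θ := by gcongr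
      _ ≤ b + 1 := by linarith
      _ ≤ j := hb_le
      _ = 2 ^ d * (2 ^ k * ψ - a) := hψj.symm
  · calc 2 ^ k * ψ - a ≤ 2 ^ k * θ - a := by gcongr
      _ ≤ 1 := ha

theorem left_endpoint_mem (hθ : θ ∈ HeadXi) (hn : n ≠ 0) (hp : 2 ^ n * θ = θ + p)
    (hmin : ∀ k < n, k ≠ 0 → ∀ a : ℤ, 2 ^ k * θ ≠ θ + a) (hψ : 2 ^ n * ψ = p) : ψ ∈ HeadXi := by
  have hpow : (1 : ℝ) < 2 ^ n := one_lt_pow₀ one_lt_two hn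
  have hψ₀ : 0 < ψ := by nlinarith [hθ.1]
  have hψθ : ψ ≤ θ := left_endpoint_le hθ.1.le hp hψ
  have hψ₂ : ψ ≤ 1 / 2 := hψθ.trans hθ.2.1
  refine mem_of_two_pow_mul_eq_int hψ₀ hψ₂ hψ fun k hk ↦ ?_
  obtain rfl | hk₀ := eq_or_ne k 0
  · exact staysAbove_zero (by linarith)
  · exact staysAbove_left_endpoint hθ hp hψ hk.le (hmin k hk hk₀)

theorem exists_minimal_dyadic (hθ₀ : 0 < θ) (hθ₁ : θ < 1)
    (h : ∃ m : ℕ, ∃ p : ℤ, 2 ^ m * θ = p) :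
    ∃ p m : ℕ, 1 ≤ p ∧ m ≠ 0 ∧ 2 ^ m * θ = p ∧ ∀ k < m, ∀ a : ℤ, 2 ^ k * θ ≠ a := by
  obtain ⟨m, hm⟩ := exists_minimal_of_wellFoundedLT _ h
  obtain ⟨p, hp⟩ := hm.prop
  have hp₀ : 0 < p := by exact_mod_cast hp ▸ mul_pos (by positivity) hθ₀
  lift p to ℕ using hp₀.le
  refine ⟨p, m, by exact_mod_cast hp₀, ?_, by exact_mod_cast hp,
    fun k hk a ha ↦ hm.not_prop_of_lt hk ⟨a, ha⟩⟩
  rintro rfl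
  have hp₁ : (1 : ℝ) ≤ p := by exact_mod_cast hp₀
  simp only [pow_zero, one_mul, Int.cast_natCast] at hp
  linarith

theorem exists_minimal_periodic (hθ₀ : 0 < θ)
    (h : ∃ n : ℕ, n ≠ 0 ∧ ∃ p : ℤ, 2 ^ n * θ = θ + p) :
    ∃ p n : ℕ, 1 ≤ p ∧ n ≠ 0 ∧ 2 ^ n * θ = θ + p ∧
      ∀ k < n, k ≠ 0 → ∀ a : ℤ, 2 ^ k * θ ≠ θ + a := by
  obtain ⟨n, hn⟩ := exists_minimal_of_wellFoundedLT _ h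
  obtain ⟨hn₀, p, hp⟩ := hn.prop
  have hpow : (1 : ℝ) < 2 ^ n := one_lt_pow₀ one_lt_two hn₀
  have hp₀ : 0 < p := by exact_mod_cast (by nlinarith : (0 : ℝ) < p)
  lift p to ℕ using hp₀.le
  exact ⟨p, n, by exact_mod_cast hp₀, hn₀, by exact_mod_cast hp,
    fun k hk hk₀ a ha ↦ hn.not_prop_of_lt hk ⟨hk₀, a, ha⟩⟩

end HeadXi

/-- (i) A dyadic `θ = p/2^m ∈ Ξ` with `θ < 1/2` is the infimum of a connected component
`(p/2^m, p/(2^m - 1))` of `(0, 1/2) ∖ Ξ` whose supremum `p/(2^m - 1)` lies in `Ξ`.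
(ii) A rational `θ = q/(2^r - 1) ∈ Ξ` is the supremum of a connected component
`(p/2ⁿ, p/(2ⁿ - 1))` of `(0, 1/2) ∖ Ξ` whose infimum `p/2ⁿ` lies in `Ξ`. -/
theorem headXi_dyadic_and_periodic_endpoints :
    (∀ θ ∈ HeadXi, θ < 1/2 →
      (∃ p m : ℕ, 1 ≤ p ∧ 1 ≤ m ∧ θ = (p : ℝ) / 2 ^ m) →
      ∃ p m : ℕ, 1 ≤ p ∧ 1 ≤ m ∧ θ = (p : ℝ) / 2 ^ m ∧
        ((p : ℝ) / (2 ^ m - 1)) ∈ HeadXi ∧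
        Set.Ioo ((p : ℝ) / 2 ^ m) ((p : ℝ) / (2 ^ m - 1)) ∩ HeadXi = ∅) ∧
    (∀ θ ∈ HeadXi,
      (∃ q r : ℕ, 1 ≤ q ∧ 1 ≤ r ∧ θ = (q : ℝ) / (2 ^ r - 1)) →
      ∃ p n : ℕ, 1 ≤ p ∧ 1 ≤ n ∧ θ = (p : ℝ) / (2 ^ n - 1) ∧
        ((p : ℝ) / 2 ^ n) ∈ HeadXi ∧
        Set.Ioo ((p : ℝ) / 2 ^ n) ((p : ℝ) / (2 ^ n - 1)) ∩ HeadXi = ∅) := by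
  constructor
  · rintro θ hθ hlt ⟨q, r, -, -, hqr⟩
    obtain ⟨p, m, hp₁, hm, hp, hmin⟩ :=
      HeadXi.exists_minimal_dyadic hθ.1 (by linarith)
        ⟨r, q, mod_cast HeadXi.eq_div_two_pow_iff.1 hqr⟩
    refine ⟨p, m, hp₁, Nat.one_le_iff_ne_zero.2 hm, HeadXi.eq_div_two_pow_iff.2 hp, ?_,
      by simpa only [Int.cast_natCast] using HeadXi.Ioo_inter_eq_empty p hm⟩
    exact HeadXi.right_endpoint_mem hθ hlt (mod_cast hp) hmin
      ((HeadXi.eq_div_two_pow_sub_one_iff hm).1 (by rw [Int.cast_natCast]))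
  · rintro θ hθ ⟨q, r, -, hr, hqr⟩
    have hr₀ : r ≠ 0 := Nat.one_le_iff_ne_zero.1 hr
    obtain ⟨p, n, hp₁, hn, hp, hmin⟩ := HeadXi.exists_minimal_periodic hθ.1
      ⟨r, hr₀, q, mod_cast (HeadXi.eq_div_two_pow_sub_one_iff hr₀).1 hqr⟩
    refine ⟨p, n, hp₁, Nat.one_le_iff_ne_zero.2 hn,
      (HeadXi.eq_div_two_pow_sub_one_iff hn).2 hp, ?_,
      by simpa only [Int.cast_natCast] using HeadXi.Ioo_inter_eq_empty p hn⟩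
    exact HeadXi.left_endpoint_mem hθ hn (mod_cast hp) hmin
      (HeadXi.eq_div_two_pow_iff.1 (by rw [Int.cast_natCast]))
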